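/- arXiv:0804.3209 — 2 statements merged into one kernel-verified Lean document; each statement's English description precedes it below -/
import Mathlib

section
/- Let ρ : L∞ → ℝ be a coherent risk measure with dual representation ρ(X) = sup_{f∈H} E[−fX] for a convex, σ(L¹,L∞)-closed set H of densities. If for every X ∈ L∞ the supremum in the representation is attained, then H is weakly compact in L¹. -/
open MeasureTheory

open Filter Topology

lemma simons_step {V : Type*} [NormedAddCommGroup V] [NormedSpace ℝ V] (p : V → ℝ)
    (hmid : ∀ x y, p ((1/2:ℝ) • x + (1/2:ℝ) • y) ≤ (p x + p y) / 2)
    (C C' : Set V) (hCC : C' ⊆ C) (hne : C.Nonempty)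
    (hC : ∀ x ∈ C, ∀ y ∈ C, (1/2:ℝ) • x + (1/2:ℝ) • y ∈ C)
    (S : V) (t d d' : ℝ) (ht : 0 < t) (hd : d' < d)
    (h : ∀ Y ∈ C, p S + d * t ≤ p (S + t • Y)) :
    ∃ Y0 ∈ C, ∀ Y ∈ C', p (S + (t/2) • Y0) + d' * (t/2) ≤
      p ((S + (t/2) • Y0) + (t/2) • Y) := by
  let A : Set ℝ := (fun Y => p (S + t • Y)) '' C
  have hA : A.Nonempty := hne.image _
  have hb : BddBelow A := ⟨p S + d * t, by rintro _ ⟨Y, hY, rfl⟩; exact h Y hY⟩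
  have hlb : p S + d * t ≤ sInf A := le_csInf hA (by rintro _ ⟨Y, hY, rfl⟩; exact h Y hY)
  obtain ⟨_, ⟨Y0, hY0, rfl⟩, hlt⟩ := exists_lt_of_csInf_lt hA
    (show sInf A < sInf A + (d - d') * t by nlinarith)
  refine ⟨Y0, hY0, fun Y hY => ?_⟩
  have h1 : p (S + (t/2) • Y0) ≤ (p S + p (S + t • Y0)) / 2 := by
    have := hmid S (S + t • Y0)
    convert this using 2
    module
  have h2 : sInf A ≤ p ((S + (t/2) • Y0) + (t/2) • Y) := by
    refine csInf_le hb ⟨_, hC Y0 hY0 Y (hCC hY), ?_⟩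
    simp only
    congr 1
    module
  simp only at hlt
  nlinarith

lemma simons_dini {V ι : Type*} [NormedAddCommGroup V] [NormedSpace ℝ V] [CompleteSpace V]
    (φ : ι → V →L[ℝ] ℝ) (hφ : ∀ i x, |φ i x| ≤ ‖x‖)
    (hatt : ∀ X, ∃ i, ∀ j, φ j X ≤ φ i X)
    (e : ℕ → V) (he : ∀ n, ‖e n‖ ≤ 1) (hanti : ∀ i, Antitone fun n => φ i (e n))
    (hlim : ∀ i, Tendsto (fun n => φ i (e n)) atTop (𝓝 0)) (ε : ℝ) (hε : 0 < ε) :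
    ∃ n, ∀ i, φ i (e n) < ε := by
  by_contra hcon
  push Not at hcon
  choose g hg using hatt
  let p : V → ℝ := fun X => φ (g X) X
  have hmid : ∀ x y, p ((1/2:ℝ) • x + (1/2:ℝ) • y) ≤ (p x + p y) / 2 := by
    intro x y
    have h1 := hg x (g ((1/2:ℝ) • x + (1/2:ℝ) • y))
    have h2 := hg y (g ((1/2:ℝ) • x + (1/2:ℝ) • y))
    simp only [p]
    rw [map_add, map_smul, map_smul, smul_eq_mul, smul_eq_mul]
    linarith
  have hlip : ∀ x y, p x ≤ p y + ‖x - y‖ := by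
    intro x y
    have h1 := hg y (g x)
    have h2 := (abs_le.1 (hφ (g x) (x - y))).2
    rw [map_sub] at h2
    simp only [p]; linarith
  let C : ℕ → Set V := fun n => {Y | ‖Y‖ ≤ 1 ∧ (∀ i, φ i Y ≤ φ i (e n)) ∧
    ∃ m, ∀ i, φ i (e m) ≤ φ i Y}
  have hCe : ∀ n, e n ∈ C n := fun n => ⟨he n, fun i => le_rfl, n, fun i => le_rfl⟩
  have hCanti : ∀ n m, n ≤ m → C m ⊆ C n := by
    rintro n m hnm Y ⟨h1, h2, h3⟩
    exact ⟨h1, fun i => (h2 i).trans (hanti i hnm), h3⟩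
  have hCconv : ∀ n, ∀ x ∈ C n, ∀ y ∈ C n, (1/2:ℝ) • x + (1/2:ℝ) • y ∈ C n := by
    rintro n x ⟨h1, h2, m, h3⟩ y ⟨k1, k2, m', k3⟩
    refine ⟨?_, fun i => ?_, max m m', fun i => ?_⟩
    · refine (norm_add_le _ _).trans ?_
      rw [norm_smul, norm_smul]; norm_num; linarith
    · have := h2 i; have := k2 i
      simp only [map_add, map_smul, smul_eq_mul]; linarith
    · have a := (hanti i (le_max_left m m')).trans (h3 i)
      have b := (hanti i (le_max_right m m')).trans (k3 i)
      simp only [map_add, map_smul, smul_eq_mul]; simp only at a b; linarith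
  have hCp : ∀ n, ∀ Y ∈ C n, ε ≤ p Y := by
    rintro n Y ⟨_, _, m, h⟩
    obtain ⟨i, hi⟩ := hcon m
    exact hi.trans ((h i).trans (hg Y i))
  have hp0 : p 0 = 0 := by simp [p]
  let t : ℕ → ℝ := fun n => (1/2)^n
  have htpos : ∀ n, 0 < t n := fun n => by positivity
  have htS : ∀ n, t (n+1) = t n / 2 := fun n => by simp only [t]; ring
  let d : ℕ → ℝ := fun n => ε / 2 + ε / 2 * t n
  have hd : ∀ n, d (n+1) < d n := by
    intro n; simp only [d, htS]; nlinarith [htpos n]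
  let P : ℕ → V → Prop := fun n S => ∀ Y ∈ C n, p S + d n * t n ≤ p (S + t n • Y)
  have hP0 : P 0 0 := by
    intro Y hY
    have := hCp 0 Y hY
    simp only [hp0, d, t, pow_zero, zero_add, one_smul]; linarith
  have hstep : ∀ n S, P n S → ∃ Y0 ∈ C n, P (n+1) (S + t (n+1) • Y0) := by
    intro n S hS
    obtain ⟨Y0, h1, h2⟩ := simons_step p hmid (C n) (C (n+1)) (hCanti n (n+1) n.le_succ)
      ⟨_, hCe n⟩ (hCconv n) S (t n) (d n) (d (n+1)) (htpos n) (hd n) hS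
    refine ⟨Y0, h1, ?_⟩
    simp only [P, htS]
    exact h2
  choose! F hF1 hF2 using hstep
  let S : ℕ → V := fun n => Nat.rec 0 (fun n s => s + t (n+1) • F n s) n
  have hS1 : ∀ n, S (n+1) = S n + t (n+1) • F n (S n) := fun n => rfl
  have hSP : ∀ n, P n (S n) := by
    intro n
    induction n with
    | zero => exact hP0
    | succ n ih => rw [hS1]; exact hF2 n _ ih
  have hY : ∀ n, F n (S n) ∈ C n := fun n => hF1 n _ (hSP n)
  -- tails
  have htail : ∀ n k, ∀ Z ∈ C (n+k), ∃ Z' ∈ C n, S (n+k) + t (n+k) • Z = S n + t n • Z' := by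
    intro n k
    induction k with
    | zero => intro Z hZ; exact ⟨Z, hZ, rfl⟩
    | succ k ih =>
      intro Z hZ
      obtain ⟨Z', h1, h2⟩ := ih _ (hCconv (n+k) _ (hY (n+k)) Z (hCanti (n+k) (n+k+1) (Nat.le_succ _) hZ))
      refine ⟨Z', h1, ?_⟩
      rw [← h2, ← add_assoc, hS1, htS]
      module
  have hlow : ∀ n k, p (S n) + ε / 2 * t n ≤ p (S (n+k)) + t (n+k) := by
    intro n k
    obtain ⟨Z', h1, h2⟩ := htail n k _ (hCe (n+k))
    have h3 := hSP n Z' h1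
    rw [← h2] at h3
    have h4 := hlip (S (n+k) + t (n+k) • e (n+k)) (S (n+k))
    rw [add_sub_cancel_left, norm_smul, Real.norm_of_nonneg (htpos _).le] at h4
    have h5 := he (n+k)
    have h6 : ε / 2 * t n ≤ d n * t n := by
      simp only [d]; nlinarith [htpos n, mul_pos (mul_pos hε (htpos n)) (htpos n)]
    nlinarith [htpos (n+k)]
  have hcau : CauchySeq S := by
    refine cauchySeq_of_le_geometric (1/2) 1 (by norm_num) fun n => ?_
    rw [hS1, dist_eq_norm, sub_add_cancel_left, norm_neg, norm_smul, Real.norm_of_nonneg (htpos _).le, htS]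
    have := (hY n).1
    have h2 := htpos n
    change t n / 2 * _ ≤ 1 * t n
    nlinarith [norm_nonneg (F n (S n))]
  obtain ⟨L, hL⟩ := cauchySeq_tendsto_of_complete hcau
  have hpcont : Continuous p := by
    refine (LipschitzWith.of_le_add fun x y => ?_).continuous
    rw [dist_eq_norm]; exact hlip x y
  have htlim : Tendsto t atTop (𝓝 0) := tendsto_pow_atTop_nhds_zero_of_lt_one (by norm_num) (by norm_num)
  have hadd : ∀ n, Tendsto (fun k => n + k) atTop atTop := fun n =>
    tendsto_atTop_mono (fun k => Nat.le_add_left k n) tendsto_id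
  have hlowL : ∀ n, p (S n) + ε / 2 * t n ≤ p L := by
    intro n
    have : Tendsto (fun k => p (S (n+k)) + t (n+k)) atTop (𝓝 (p L + 0)) :=
      (((hpcont.tendsto L).comp hL).add htlim).comp (hadd n)
    rw [add_zero] at this
    exact ge_of_tendsto' this (hlow n)
  have hup : ∀ n k, φ (g L) (S (n+k)) - φ (g L) (S n) ≤ (t n - t (n+k)) * φ (g L) (e n) := by
    intro n k
    induction k with
    | zero => simp
    | succ k ih =>
      have h1 := ((hY (n+k)).2.1 (g L)).trans (hanti (g L) (Nat.le_add_right n k))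
      rw [← add_assoc, hS1, map_add, map_smul, smul_eq_mul, htS]
      simp only at h1
      nlinarith [htpos (n+k)]
  have hupL : ∀ n, φ (g L) L - φ (g L) (S n) ≤ t n * φ (g L) (e n) := by
    intro n
    have h1 : Tendsto (fun k => φ (g L) (S (n+k)) - φ (g L) (S n)) atTop
        (𝓝 (φ (g L) L - φ (g L) (S n))) :=
      ((((φ (g L)).continuous.tendsto L).comp hL).comp (hadd n)).sub_const _
    have h2 : Tendsto (fun k => (t n - t (n+k)) * φ (g L) (e n)) atTop
        (𝓝 ((t n - 0) * φ (g L) (e n))) :=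
      ((htlim.comp (hadd n)).const_sub _).mul_const _
    rw [sub_zero] at h2
    exact le_of_tendsto_of_tendsto' h1 h2 (hup n)
  have hfin : ∀ n, ε / 2 ≤ φ (g L) (e n) := by
    intro n
    have h1 := hlowL n
    have h2 := hupL n
    have h3 := hg (S n) (g L)
    have : ε / 2 * t n ≤ φ (g L) (e n) * t n := by
      simp only [p] at h1; linarith
    exact le_of_mul_le_mul_right this (htpos n)
  have := ge_of_tendsto' (hlim (g L)) hfin
  linarith


lemma grothendieck_ultra {E F : Type*} [NormedAddCommGroup E] [NormedSpace ℝ E] [CompleteSpace E]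
    [NormedAddCommGroup F] [InnerProductSpace ℝ F] [CompleteSpace F] (T : F →L[ℝ] E)
    (H : Set E) (hH : ∀ ε > 0, ∃ r : ℝ, ∀ f ∈ H, ∃ y : F, ‖y‖ ≤ r ∧ ‖f - T y‖ ≤ ε)
    (U : Ultrafilter E) (hU : H ∈ U) :
    ∃ g : E, ∀ ψ : StrongDual ℝ E, Tendsto ψ U (𝓝 (ψ g)) := by
  have key : ∀ ε > 0, ∃ y : E → F, ∃ z : F, (∀ f ∈ H, ‖f - T (y f)‖ ≤ ε) ∧
      ∀ ψ : StrongDual ℝ E, Tendsto (fun f => ψ (T (y f))) U (𝓝 (ψ (T z))) := by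
    intro ε hε
    obtain ⟨r, hr⟩ := hH ε hε
    choose! y hy using hr
    have hc := WeakDual.isCompact_closedBall (𝕜 := ℝ) (0 : StrongDual ℝ F) r
    let D : E → WeakDual ℝ F := fun f => StrongDual.toWeakDual (InnerProductSpace.toDual ℝ F (y f))
    obtain ⟨l, -, hl⟩ := hc.ultrafilter_le_nhds (U.map D) (by
      rw [le_principal_iff]
      refine mem_map.2 (mem_of_superset hU fun f hf => ?_)
      simp only [Set.mem_preimage, D, Metric.mem_closedBall, dist_zero_right]
      simpa using (hy f hf).1)
    have hl' : Tendsto D U (𝓝 l) := hl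
    refine ⟨y, (InnerProductSpace.toDual ℝ F).symm (WeakDual.toStrongDual l), fun f hf => (hy f hf).2,
      fun ψ => ?_⟩
    let w := (InnerProductSpace.toDual ℝ F).symm (ψ.comp T)
    have hw : ∀ x, ψ (T x) = inner ℝ w x := fun x => by
      simp [w, InnerProductSpace.toDual_symm_apply]
    have h1 : Tendsto (fun f => D f w) U (𝓝 (l w)) := ((WeakDual.eval_continuous w).tendsto l).comp hl'
    have h2 : ψ (T ((InnerProductSpace.toDual ℝ F).symm (WeakDual.toStrongDual l))) = l w := by
      rw [hw, real_inner_comm, InnerProductSpace.toDual_symm_apply]; rfl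
    rw [h2]
    refine h1.congr fun f => ?_
    rw [hw, real_inner_comm]; rfl
  let ε : ℕ → ℝ := fun n => (1/2)^n
  have hεpos : ∀ n, 0 < ε n := fun n => by positivity
  have hεlim : Tendsto ε atTop (𝓝 0) := tendsto_pow_atTop_nhds_zero_of_lt_one (by norm_num) (by norm_num)
  choose y z hy hz using fun n => key (ε n) (hεpos n)
  have hdist : ∀ n m, ‖T (z n) - T (z m)‖ ≤ ε n + ε m := by
    intro n m
    obtain ⟨ψ, h1, h2⟩ := exists_dual_vector'' ℝ (T (z n) - T (z m))
    have h3 : Tendsto (fun f => ψ (T (y n f)) - ψ (T (y m f))) U (𝓝 (ψ (T (z n)) - ψ (T (z m)))) :=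
      (hz n ψ).sub (hz m ψ)
    rw [← map_sub, h2] at h3
    refine le_of_tendsto h3 (mem_of_superset hU fun f hf => ?_)
    have a := hy n f hf
    have b := hy m f hf
    have c : ψ (T (y n f)) - ψ (T (y m f)) = ψ ((f - T (y m f)) - (f - T (y n f))) := by
      simp only [map_sub]; ring
    show ψ (T (y n f)) - ψ (T (y m f)) ≤ _
    rw [c]
    refine (le_abs_self _).trans ((ψ.le_of_opNorm_le h1 _).trans ?_)
    have := norm_sub_le (f - T (y m f)) (f - T (y n f))
    linarith
  have hcau : CauchySeq fun n => T (z n) := by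
    refine cauchySeq_of_le_geometric (1/2) 2 (by norm_num) fun n => ?_
    rw [dist_eq_norm]
    refine (hdist n (n+1)).trans ?_
    have := hεpos n
    simp only [ε, pow_succ] at *
    linarith
  obtain ⟨g, hg⟩ := cauchySeq_tendsto_of_complete hcau
  refine ⟨g, fun ψ => ?_⟩
  rw [Metric.tendsto_nhds]
  intro e he
  let η := e / (2 * ‖ψ‖ + 2)
  have hη : 0 < η := by positivity
  have hη2 : η * (2 * ‖ψ‖ + 2) = e := by simp only [η]; field_simp
  obtain ⟨n, h1, h2⟩ := ((Metric.tendsto_nhds.1 hg η hη).and (hεlim.eventually_lt_const hη)).exists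
  filter_upwards [Metric.tendsto_nhds.1 (hz n ψ) η hη, hU] with f h3 h4
  rw [dist_eq_norm] at *
  have h5 := ψ.le_opNorm (f - T (y n f))
  have h6 := ψ.le_opNorm (T (z n) - g)
  have h7 := hy n f h4
  have h8 : ψ f - ψ g = ψ (f - T (y n f)) + (ψ (T (y n f)) - ψ (T (z n))) + ψ (T (z n) - g) := by
    simp only [map_sub]; ring
  rw [h8]
  refine (norm_add₃_le).trans_lt ?_
  nlinarith [norm_nonneg ψ]

lemma weak_compact_of_approx {E F : Type*} [NormedAddCommGroup E] [NormedSpace ℝ E] [CompleteSpace E]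
    [NormedAddCommGroup F] [InnerProductSpace ℝ F] [CompleteSpace F] (T : F →L[ℝ] E)
    (H : Set E) (hH : ∀ ε > 0, ∃ r : ℝ, ∀ f ∈ H, ∃ y : F, ‖y‖ ≤ r ∧ ‖f - T y‖ ≤ ε)
    (hclosed : IsClosed (toWeakSpace ℝ E '' H)) : IsCompact (toWeakSpace ℝ E '' H) := by
  rw [isCompact_iff_ultrafilter_le_nhds]
  intro U hU
  rw [le_principal_iff] at hU
  have hU' : H ∈ U.map (toWeakSpace ℝ E).symm := by
    rw [Ultrafilter.mem_map]
    refine mem_of_superset hU ?_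
    rintro _ ⟨f, hf, rfl⟩
    simpa using hf
  obtain ⟨g, hg⟩ := grothendieck_ultra T H hH _ hU'
  have hlim : Tendsto (fun x : WeakSpace ℝ E => x) U (𝓝 (toWeakSpace ℝ E g)) := by
    refine (WeakBilin.tendsto_iff_forall_eval_tendsto (topDualPairing ℝ E).flip ?_).2 ?_
    · intro x y hxy
      exact (SeparatingDual.eq_iff_forall_dual_eq (R := ℝ)).2 fun ψ => LinearMap.congr_fun hxy ψ
    · intro ψ
      have := hg ψ
      rw [Ultrafilter.coe_map, tendsto_map'_iff] at this
      exact this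
  refine ⟨_, ?_, hlim⟩
  exact hclosed.mem_of_tendsto hlim hU


/-- The inclusion of `L²` in `L¹` for a probability measure. -/
noncomputable def inclTwoOne {Ω : Type*} [MeasurableSpace Ω] (μ : Measure Ω) [IsProbabilityMeasure μ] :
    Lp ℝ 2 μ →L[ℝ] Lp ℝ 1 μ :=
  LinearMap.mkContinuous
    { toFun := fun y => ((Lp.memLp y).mono_exponent (by norm_num : (1 : ENNReal) ≤ 2)).toLp y
      map_add' := fun x y => by
        rw [← MemLp.toLp_add]
        exact MemLp.toLp_congr _ _ (Lp.coeFn_add x y)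
      map_smul' := fun c x => by
        rw [RingHom.id_apply, ← MemLp.toLp_const_smul]
        exact MemLp.toLp_congr _ _ (Lp.coeFn_smul c x) } 1 (fun y => by
      rw [one_mul, LinearMap.coe_mk, AddHom.coe_mk, Lp.norm_toLp, Lp.norm_def]
      exact ENNReal.toReal_mono (Lp.eLpNorm_ne_top y)
        (eLpNorm_le_eLpNorm_of_exponent_le (by norm_num) (Lp.aestronglyMeasurable y)))

lemma inclTwoOne_coe {Ω : Type*} [MeasurableSpace Ω] (μ : Measure Ω) [IsProbabilityMeasure μ]
    (y : Lp ℝ 2 μ) : (inclTwoOne μ y : Ω → ℝ) =ᵐ[μ] y :=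
  MemLp.coeFn_toLp ((Lp.memLp y).mono_exponent (by norm_num : (1 : ENNReal) ≤ 2))

lemma approx_of_ui {Ω : Type*} [MeasurableSpace Ω] {μ : Measure Ω} [IsProbabilityMeasure μ]
    (H : Set (Lp ℝ 1 μ))
    (hdens : ∀ f ∈ H, 0 ≤ f ∧ ∫ ω, (f : Ω → ℝ) ω ∂μ = 1)
    (hui : ∀ ε > 0, ∃ δ > 0, ∀ A : Set Ω, MeasurableSet A → μ.real A ≤ δ →
      ∀ f ∈ H, ∫ ω in A, (f : Ω → ℝ) ω ∂μ ≤ ε) :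
    ∀ ε > 0, ∃ r : ℝ, ∀ f ∈ H, ∃ y : Lp ℝ 2 μ, ‖y‖ ≤ r ∧ ‖f - inclTwoOne μ y‖ ≤ ε := by
  intro ε hε
  obtain ⟨δ, hδ, h⟩ := hui ε hε
  let c : ℝ := 1 / δ
  have hc : 0 < c := by positivity
  refine ⟨c, fun f hf => ?_⟩
  obtain ⟨hf0, hf1⟩ := hdens f hf
  have hf0' : 0 ≤ᵐ[μ] (f : Ω → ℝ) := (Lp.coeFn_nonneg f).2 hf0
  have hfi : Integrable (f : Ω → ℝ) μ := L1.integrable_coeFn f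
  have hb : ∀ᵐ x ∂μ, ‖min (f x) c‖ ≤ c := by
    filter_upwards [hf0'] with x hx
    rw [Real.norm_of_nonneg (le_min hx hc.le)]
    exact min_le_right _ _
  have hm : MemLp (fun x => min (f x) c) 2 μ :=
    MemLp.of_bound (hfi.1.inf aestronglyMeasurable_const) c hb
  refine ⟨hm.toLp, ?_, ?_⟩
  · have := Lp.norm_le_of_ae_bound (f := hm.toLp) hc.le (by
      filter_upwards [hm.coeFn_toLp, hb] with x h1 h2
      rw [h1]; exact h2)
    simpa [measureUnivNNReal] using this
  · have hA : MeasurableSet {x | c ≤ f x} :=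
      measurableSet_le measurable_const (Lp.stronglyMeasurable f).measurable
    have hμA : μ.real {x | c ≤ f x} ≤ δ := by
      have := mul_meas_ge_le_integral_of_nonneg hf0' hfi c
      rw [hf1] at this
      simp only [c] at this ⊢
      rw [one_div, inv_mul_le_iff₀ hδ, mul_one] at this
      rwa [one_div]
    refine le_trans ?_ (h _ hA hμA f hf)
    rw [L1.norm_eq_integral_norm, ← integral_indicator hA]
    refine integral_mono_ae (L1.integrable_coeFn _).norm (hfi.indicator hA) ?_
    filter_upwards [Lp.coeFn_sub f (inclTwoOne μ hm.toLp), inclTwoOne_coe μ hm.toLp,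
      hm.coeFn_toLp, hf0'] with x h1 h2 h3 h4
    simp only [Pi.zero_apply] at h4
    rw [h1, Pi.sub_apply, h2, h3, Set.indicator_apply]
    split_ifs with hx
    · rw [min_eq_right hx, Real.norm_of_nonneg (sub_nonneg.2 hx)]; linarith
    · rw [min_eq_left (not_le.1 hx).le]; simp

lemma ae_le_norm_top {Ω : Type*} [MeasurableSpace Ω] {μ : Measure Ω} (X : Lp ℝ ⊤ μ) :
    ∀ᵐ x ∂μ, ‖X x‖ ≤ ‖X‖ := by
  filter_upwards [ae_le_eLpNormEssSup (f := (X : Ω → ℝ)) (μ := μ)] with x hx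
  rw [Lp.norm_def, eLpNorm_exponent_top, ← toReal_enorm]
  refine ENNReal.toReal_mono ?_ hx
  have := Lp.eLpNorm_ne_top X
  rwa [eLpNorm_exponent_top] at this

lemma ui_of_attain {Ω : Type*} [MeasurableSpace Ω] {μ : Measure Ω} [IsProbabilityMeasure μ]
    (H : Set (Lp ℝ 1 μ))
    (hdens : ∀ f ∈ H, 0 ≤ f ∧ ∫ ω, (f : Ω → ℝ) ω ∂μ = 1)
    (hattain : ∀ X : Lp ℝ ⊤ μ, ∃ g ∈ H, ∀ f ∈ H,
      ∫ ω, -((f : Ω → ℝ) ω * (X : Ω → ℝ) ω) ∂μ ≤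
        ∫ ω, -((g : Ω → ℝ) ω * (X : Ω → ℝ) ω) ∂μ) :
    ∀ ε > 0, ∃ δ > 0, ∀ A : Set Ω, MeasurableSet A → μ.real A ≤ δ →
      ∀ f ∈ H, ∫ ω in A, (f : Ω → ℝ) ω ∂μ ≤ ε := by
  intro ε hε
  by_contra hcon
  push Not at hcon
  choose A hA hμA F hFH hF using fun n : ℕ => hcon ((1/2)^n) (by positivity)
  let B : ℕ → Set Ω := fun n => ⋃ k, A (k + n)
  have hB : ∀ n, MeasurableSet (B n) := fun n => MeasurableSet.iUnion fun k => hA _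
  have hAB : ∀ n, A n ⊆ B n := fun n x hx => Set.mem_iUnion.2 ⟨0, by simpa using hx⟩
  have hBanti : Antitone B := by
    intro n m hnm x hx
    obtain ⟨k, hk⟩ := Set.mem_iUnion.1 hx
    refine Set.mem_iUnion.2 ⟨k + (m - n), ?_⟩
    rwa [show k + (m - n) + n = k + m by omega]
  have hμA' : ∀ n, μ (A n) ≤ (ENNReal.ofReal (1/2))^n := by
    intro n
    rw [← ENNReal.ofReal_pow (by norm_num), ← ofReal_measureReal]
    exact ENNReal.ofReal_le_ofReal (hμA n)
  have hBlim : Tendsto (μ ∘ B) atTop (𝓝 0) := by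
    refine tendsto_of_tendsto_of_tendsto_of_le_of_le tendsto_const_nhds
      (ENNReal.tendsto_sum_nat_add (fun n => (ENNReal.ofReal (1/2))^n) ?_)
      (fun n => zero_le) (fun n => ?_)
    · rw [ENNReal.tsum_geometric]
      refine ENNReal.inv_ne_top.2 ?_
      refine (tsub_pos_of_lt ?_).ne'
      rw [← ENNReal.ofReal_one]
      exact (ENNReal.ofReal_lt_ofReal_iff one_pos).2 (by norm_num)
    · exact (measure_iUnion_le _).trans (ENNReal.tsum_le_tsum fun k => hμA' _)
  let φ : H → Lp ℝ ⊤ μ →L[ℝ] ℝ := fun f => (ContinuousLinearMap.mul ℝ ℝ).lpPairing μ 1 ⊤ f.1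
  have hφ : ∀ (f : H) X, φ f X = ∫ ω, (f.1 : Ω → ℝ) ω * X ω ∂μ := fun f X =>
    ContinuousLinearMap.lpPairing_eq_integral _ _ _
  have hpos : ∀ f : H, 0 ≤ᵐ[μ] (f.1 : Ω → ℝ) := fun f => (Lp.coeFn_nonneg f.1).2 (hdens _ f.2).1
  have hint : ∀ f : H, Integrable (f.1 : Ω → ℝ) μ := fun f => L1.integrable_coeFn f.1
  have hbound : ∀ f X, |φ f X| ≤ ‖X‖ := by
    intro f X
    rw [hφ, ← Real.norm_eq_abs]
    refine (norm_integral_le_of_norm_le ((hint f).mul_const ‖X‖) ?_).trans ?_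
    · filter_upwards [hpos f, ae_le_norm_top X] with x h1 h2
      rw [norm_mul, Real.norm_of_nonneg h1]
      exact mul_le_mul_of_nonneg_left h2 h1
    · rw [integral_mul_const, (hdens _ f.2).2, one_mul]
  have hatt : ∀ X, ∃ f, ∀ f', φ f' X ≤ φ f X := by
    intro X
    obtain ⟨g, hg, h⟩ := hattain (-X)
    refine ⟨⟨g, hg⟩, fun f' => ?_⟩
    have key : ∀ f : H, ∫ ω, -((f.1 : Ω → ℝ) ω * ((-X : Lp ℝ ⊤ μ) : Ω → ℝ) ω) ∂μ = φ f X := by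
      intro f
      rw [integral_neg, ← hφ, map_neg, neg_neg]
    have := h f'.1 f'.2
    rwa [key f', key ⟨g, hg⟩] at this
  let e : ℕ → Lp ℝ ⊤ μ := fun n => indicatorConstLp ⊤ (hB n) (measure_ne_top μ _) (1 : ℝ)
  have he : ∀ n, ‖e n‖ ≤ 1 := fun n => by
    refine norm_indicatorConstLp_le.trans ?_
    simp
  have hφe : ∀ f n, φ f (e n) = ∫ ω in B n, (f.1 : Ω → ℝ) ω ∂μ := by
    intro f n
    rw [hφ, ← integral_indicator (hB n)]
    refine integral_congr_ae ?_
    filter_upwards [indicatorConstLp_coeFn (p := ⊤) (hs := hB n) (hμs := measure_ne_top μ _) (c := (1:ℝ))]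
      with x hx
    simp only [e]
    rw [hx]
    by_cases hxB : x ∈ B n
    · rw [Set.indicator_of_mem hxB, Set.indicator_of_mem hxB, mul_one]
    · rw [Set.indicator_of_notMem hxB, Set.indicator_of_notMem hxB, mul_zero]
  obtain ⟨n, hn⟩ := simons_dini φ hbound hatt e he
    (fun f n m hnm => by
      simp only [hφe]
      exact setIntegral_mono_set (hint f).integrableOn (ae_restrict_of_ae (hpos f))
        (hBanti hnm).eventuallyLE)
    (fun f => by
      simp only [hφe]
      exact (hint f).tendsto_setIntegral_nhds_zero hBlim) ε hε
  have h1 := hn ⟨F n, hFH n⟩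
  rw [hφe] at h1
  have h2 : ∫ ω in A n, (F n : Ω → ℝ) ω ∂μ ≤ ∫ ω in B n, (F n : Ω → ℝ) ω ∂μ :=
    setIntegral_mono_set (hint ⟨F n, hFH n⟩).integrableOn (ae_restrict_of_ae (hpos ⟨F n, hFH n⟩))
        (hAB n).eventuallyLE
  have h3 := hF n
  simp only at h1
  linarith

/-- James-type theorem: if `H` is a convex, weakly closed set of densities in `L¹`
and for every `X ∈ L∞` the supremum `sup_{f∈H} E[−fX]` is attained, then `H` is
weakly compact. -/
theorem weakly_compact_of_sup_attained {Ω : Type*} [MeasurableSpace Ω]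
    {μ : Measure Ω} [IsProbabilityMeasure μ]
    (H : Set (Lp ℝ 1 μ)) (hHne : H.Nonempty) (hconv : Convex ℝ H)
    (hdens : ∀ f ∈ H, 0 ≤ f ∧ ∫ ω, (f : Ω → ℝ) ω ∂μ = 1)
    (hclosed : IsClosed (toWeakSpace ℝ (Lp ℝ 1 μ) '' H))
    (hattain : ∀ X : Lp ℝ ⊤ μ, ∃ g ∈ H, ∀ f ∈ H,
      ∫ ω, -((f : Ω → ℝ) ω * (X : Ω → ℝ) ω) ∂μ ≤
        ∫ ω, -((g : Ω → ℝ) ω * (X : Ω → ℝ) ω) ∂μ) :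
    IsCompact (toWeakSpace ℝ (Lp ℝ 1 μ) '' H) := by
  exact weak_compact_of_approx (inclTwoOne μ) H
    (approx_of_ui H hdens (ui_of_attain H hdens hattain)) hclosed
end

section
/- Let ρ : L∞ → ℝ be a coherent risk measure given by ρ(X) = sup_{f∈H} E[−fX] with H ⊆ L¹₊ a set of densities, and let X ∈ L∞. If g ∈ H attains ρ(X) = E[−gX], then −g belongs to the subgradient of ρ at X, i.e., ρ(X+Y) ≥ ρ(X) + E[−gY] for all Y ∈ L∞. Conversely, if μ ∈ L¹ satisfies ρ(X+Y) ≥ ρ(X) + E[μY] for all Y, then −μ is in the σ(L¹,L∞)-closure of the convex hull of H and ρ(X) = E[μX]. -/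
open MeasureTheory

/-- The duality pairing `⟨f, X⟩ = E[f X]` as a continuous bilinear map. -/
noncomputable def pairL {Ω : Type*} [MeasurableSpace Ω] (μ : Measure Ω) :
    Lp ℝ 1 μ →L[ℝ] Lp ℝ ⊤ μ →L[ℝ] ℝ :=
  (ContinuousLinearMap.mul ℝ ℝ).lpPairing μ 1 ⊤

lemma pairL_eq {Ω : Type*} [MeasurableSpace Ω] {μ : Measure Ω}
    (f : Lp ℝ 1 μ) (X : Lp ℝ ⊤ μ) :
    pairL μ f X = ∫ ω, (f : Ω → ℝ) ω * (X : Ω → ℝ) ω ∂μ := by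
  rw [pairL, ContinuousLinearMap.lpPairing_eq_integral]
  rfl

/-- Every continuous functional on `L¹` of a probability space is represented by `L∞`. -/
lemma riesz_L1 {Ω : Type*} [MeasurableSpace Ω] {μ : Measure Ω} [IsProbabilityMeasure μ]
    (φ : Lp ℝ 1 μ →L[ℝ] ℝ) : ∃ Z : Lp ℝ ⊤ μ, ∀ f, φ f = pairL μ f Z := by
  classical
  let one : Lp ℝ 2 μ := indicatorConstLp 2 MeasurableSet.univ (measure_ne_top μ _) (1 : ℝ)
  let J : Lp ℝ 2 μ →L[ℝ] Lp ℝ 1 μ := (ContinuousLinearMap.mul ℝ ℝ).holderL μ 2 2 1 one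
  have hJ : ∀ f, J f =ᵐ[μ] f := by
    intro f
    have h1 := (ContinuousLinearMap.mul ℝ ℝ).coeFn_holder (r := 1) one f
    have h2 : one =ᵐ[μ] _ := indicatorConstLp_coeFn
    filter_upwards [h1, h2] with x hx hy
    change ((ContinuousLinearMap.mul ℝ ℝ).holder 1 one f : Ω → ℝ) x = _
    rw [hx, hy]; simp
  let g : Lp ℝ 2 μ := (InnerProductSpace.toDual ℝ (Lp ℝ 2 μ)).symm (φ ∘L J)
  have hg : ∀ f, inner ℝ g f = φ (J f) := by
    intro f; simp [g]
  have hgi : Integrable g μ := (Lp.memLp g).integrable (by norm_num)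
  have hind : ∀ s (hs : MeasurableSet s),
      φ (indicatorConstLp 1 hs (measure_ne_top μ s) (1 : ℝ)) = ∫ x in s, g x ∂μ := by
    intro s hs
    have e : J (indicatorConstLp 2 hs (measure_ne_top μ s) (1 : ℝ)) =
        indicatorConstLp 1 hs (measure_ne_top μ s) (1 : ℝ) := by
      apply Lp.ext
      exact (hJ _).trans (indicatorConstLp_coeFn.trans indicatorConstLp_coeFn.symm)
    rw [← e, ← hg, real_inner_comm, L2.inner_indicatorConstLp_one hs (measure_ne_top μ s) g]
  have hbd : ∀ s, MeasurableSet s → |∫ x in s, g x ∂μ| ≤ ‖φ‖ * μ.real s := by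
    intro s hs
    rw [← hind s hs, ← Real.norm_eq_abs]
    refine (φ.le_opNorm _).trans ?_
    gcongr
    rw [norm_indicatorConstLp (by norm_num) (by norm_num)]
    simp
  have hle : g ≤ᵐ[μ] fun _ => ‖φ‖ := by
    refine ae_le_of_forall_setIntegral_le hgi (integrable_const _) fun s hs _ => ?_
    have := (abs_le.1 (hbd s hs)).2
    simp only [setIntegral_const, smul_eq_mul]; linarith
  have hge : (fun _ => -‖φ‖) ≤ᵐ[μ] g := by
    refine ae_le_of_forall_setIntegral_le (integrable_const _) hgi fun s hs _ => ?_
    have := (abs_le.1 (hbd s hs)).1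
    simp only [setIntegral_const, smul_eq_mul]; linarith
  have hZ : MemLp g ⊤ μ := by
    refine memLp_top_of_bound hgi.1 ‖φ‖ ?_
    filter_upwards [hle, hge] with x h1 h2
    exact abs_le.2 ⟨h2, h1⟩
  refine ⟨hZ.toLp g, fun f => ?_⟩
  induction f using Lp.induction (hp_ne_top := ENNReal.one_ne_top) with
  | @indicatorConst c s hs hμs =>
    have e : ((Lp.simpleFunc.indicatorConst 1 hs hμs.ne c : Lp.simpleFunc ℝ 1 μ) : Lp ℝ 1 μ)
        = c • indicatorConstLp 1 hs (measure_ne_top μ s) (1 : ℝ) := by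
      rw [Lp.simpleFunc.coe_indicatorConst]
      apply Lp.ext
      filter_upwards [@indicatorConstLp_coeFn _ _ _ 1 μ _ s hs hμs.ne c,
        Lp.coeFn_smul c (indicatorConstLp 1 hs (measure_ne_top μ s) (1 : ℝ)),
        @indicatorConstLp_coeFn _ _ _ 1 μ _ s hs hμs.ne (1 : ℝ)] with x h1 h2 h3
      rw [h1, h2, Pi.smul_apply, h3]
      by_cases hx : x ∈ s <;> simp [hx]
    rw [e, map_smul, map_smul, hind s hs, ContinuousLinearMap.smul_apply, pairL_eq,
      ← integral_indicator hs]
    congr 1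
    refine integral_congr_ae ?_
    filter_upwards [hZ.coeFn_toLp,
        @indicatorConstLp_coeFn _ _ _ 1 μ _ s hs hμs.ne (1 : ℝ)] with x h1 h2
    rw [h1, h2]
    by_cases hx : x ∈ s <;> simp [hx]
  | @add f g hf hg hd h1 h2 =>
    rw [map_add, map_add, h1, h2, ContinuousLinearMap.add_apply]
  | isClosed =>
    refine isClosed_eq φ.continuous ?_
    exact ((pairL μ).flip (hZ.toLp g)).continuous

/-- Subgradient characterization for a coherent risk measure
`ρ(X) = sup_{f∈H} E[−fX]`. If `g ∈ H` attains the supremum at `X`, then `−g`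
is a subgradient of `ρ` at `X`. Conversely (for `H` convex and weakly closed),
any subgradient `μ'` of `ρ` at `X` satisfies that `−μ'` lies in the weak
closure of the convex hull of `H` and `ρ(X) = E[μ'X]`. -/
theorem coherent_subgradient_characterization {Ω : Type*} [MeasurableSpace Ω]
    {μ : Measure Ω} [IsProbabilityMeasure μ]
    (H : Set (Lp ℝ 1 μ)) (hHne : H.Nonempty)
    (hdens : ∀ f ∈ H, 0 ≤ f ∧ ∫ ω, (f : Ω → ℝ) ω ∂μ = 1)
    (ρ : Lp ℝ ⊤ μ → ℝ)
    (hρ : ∀ X : Lp ℝ ⊤ μ,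
      ρ X = ⨆ f : H, ∫ ω, -((f.1 : Ω → ℝ) ω * (X : Ω → ℝ) ω) ∂μ)
    (X : Lp ℝ ⊤ μ) :
    (∀ g ∈ H, ρ X = ∫ ω, -((g : Ω → ℝ) ω * (X : Ω → ℝ) ω) ∂μ →
      ∀ Y : Lp ℝ ⊤ μ,
        ρ X + ∫ ω, -((g : Ω → ℝ) ω * (Y : Ω → ℝ) ω) ∂μ ≤ ρ (X + Y)) ∧
    (Convex ℝ H → IsClosed (toWeakSpace ℝ (Lp ℝ 1 μ) '' H) →
      ∀ μ' : Lp ℝ 1 μ,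
        (∀ Y : Lp ℝ ⊤ μ,
          ρ X + ∫ ω, (μ' : Ω → ℝ) ω * (Y : Ω → ℝ) ω ∂μ ≤ ρ (X + Y)) →
        toWeakSpace ℝ (Lp ℝ 1 μ) (-μ') ∈
          closure (toWeakSpace ℝ (Lp ℝ 1 μ) '' (convexHull ℝ H)) ∧
        ρ X = ∫ ω, (μ' : Ω → ℝ) ω * (X : Ω → ℝ) ω ∂μ) := by
  classical
  have hρ' : ∀ X : Lp ℝ ⊤ μ, ρ X = ⨆ f : H, -pairL μ f.1 X := by
    intro X
    rw [hρ]
    congr 1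
    funext f
    rw [pairL_eq, integral_neg]
  have hnorm : ∀ f ∈ H, ‖f‖ = 1 := by
    intro f hf
    obtain ⟨h0, h1⟩ := hdens f hf
    rw [L1.norm_eq_integral_norm, ← h1]
    refine integral_congr_ae ?_
    filter_upwards [(Lp.coeFn_nonneg f).2 h0] with x hx
    exact Real.norm_of_nonneg hx
  have hbdd : ∀ X : Lp ℝ ⊤ μ, BddAbove (Set.range fun f : H => -pairL μ f.1 X) := by
    intro X
    refine ⟨‖pairL μ‖ * 1 * ‖X‖, ?_⟩
    rintro _ ⟨f, rfl⟩
    have h := (pairL μ).le_opNorm₂ f.1 X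
    rw [hnorm f.1 f.2] at h
    exact (neg_le_abs _).trans h
  have hge : ∀ f ∈ H, ∀ X, -pairL μ f X ≤ ρ X := by
    intro f hf X
    rw [hρ']
    exact le_ciSup (hbdd X) ⟨f, hf⟩
  haveI : Nonempty H := hHne.to_subtype
  have hle : ∀ X c, (∀ f ∈ H, -pairL μ f X ≤ c) → ρ X ≤ c := by
    intro X c h
    rw [hρ']
    exact ciSup_le fun f => h f.1 f.2
  have hsub : ∀ X Y, ρ (X + Y) ≤ ρ X + ρ Y := by
    intro X Y
    refine hle _ _ fun f hf => ?_
    rw [map_add]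
    linarith [hge f hf X, hge f hf Y]
  constructor
  · intro g hg hgX Y
    rw [integral_neg, ← pairL_eq] at hgX ⊢
    have := hge g hg (X + Y)
    rw [map_add] at this
    linarith
  · intro hconv _ μ' hμ'
    simp_rw [← pairL_eq] at hμ' ⊢
    constructor
    · rw [← (convex_convexHull ℝ H).toWeakSpace_closure ℝ, hconv.convexHull_eq]
      refine Set.mem_image_of_mem _ ?_
      by_contra hn
      obtain ⟨φ, u, h1, h2⟩ := geometric_hahn_banach_closed_point hconv.closure isClosed_closure hn
      obtain ⟨Z, hZ⟩ := riesz_L1 φ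
      have h3 : ρ (-Z) ≤ u := by
        refine hle _ _ fun f hf => ?_
        have := h1 f (subset_closure hf)
        rw [hZ] at this
        rw [map_neg]; linarith
      have h4 := hμ' (-Z)
      have h5 := hsub X (-Z)
      rw [hZ, map_neg, ContinuousLinearMap.neg_apply] at h2
      rw [map_neg] at h4
      linarith
    · have h1 := hμ' X
      have h2 := hsub X X
      have h3 := hμ' (-X)
      have h4 : ρ (X + -X) ≤ 0 := by
        refine hle _ _ fun f hf => ?_
        simp
      rw [map_neg] at h3
      linarith
end
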